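/- Assume V ∈ C¹(ℝ^N), c ∈ ℝ, condition (V^c) and the coercivity condition (1.7). If q ∈ ℳ_c, then (i) dist(q(t), 𝒱^c₋) → 0 as t → α_q from the right (as t → −∞ if α_q = −∞), and if α_q > −∞ then V(q(α_q)) = c and q(α_q) ∈ 𝒱^c₋; (ii) dist(q(t), 𝒱^c₊) → 0 as t → ω_q from the left (as t → +∞ if ω_q = +∞), and if ω_q < +∞ then V(q(ω_q)) = c and q(ω_q) ∈ 𝒱^c₊. -/

import Mathlib

open MeasureTheory Filter Metric Set Topology
open scoped ENNReal

noncomputable section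

abbrev Euc (N : ℕ) := EuclideanSpace ℝ (Fin N)

def setDist {E : Type*} [PseudoMetricSpace E] (A B : Set E) : ℝ :=
  sInf ((fun p : E × E => dist p.1 p.2) '' (A ×ˢ B))

def IsH1loc {N : ℕ} (q q' : ℝ → Euc N) : Prop :=
  LocallyIntegrable q' volume ∧
  (∀ a b : ℝ, IntegrableOn (fun t => ‖q' t‖ ^ 2) (Icc a b) volume) ∧
  (∀ a b : ℝ, q b - q a = ∫ t in a..b, q' t)

def lagJ {N : ℕ} (V : Euc N → ℝ) (c : ℝ) (q q' : ℝ → Euc N) (I : Set ℝ) : ℝ≥0∞ :=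
  ∫⁻ t in I, ENNReal.ofReal (2⁻¹ * ‖q' t‖ ^ 2 + (V (q t) - c))

def Gamma {N : ℕ} (V : Euc N → ℝ) (c : ℝ) (Vm Vp : Set (Euc N)) :
    Set ((ℝ → Euc N) × (ℝ → Euc N)) :=
  {p | IsH1loc p.1 p.2 ∧ (∀ t, c ≤ V (p.1 t)) ∧
    (∀ ε > 0, ∃ᶠ t in atBot, infDist (p.1 t) Vm < ε) ∧
    (∀ ε > 0, ∃ᶠ t in atTop, infDist (p.1 t) Vp < ε)}

def mc {N : ℕ} (V : Euc N → ℝ) (c : ℝ) (Vm Vp : Set (Euc N)) : ℝ≥0∞ :=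
  ⨅ (p) (_ : p ∈ Gamma V c Vm Vp), lagJ V c p.1 p.2 univ

def Coercive {N : ℕ} (V : Euc N → ℝ) (c : ℝ) (Vm Vp : Set (Euc N)) (R : ℝ) : Prop :=
  mc V c Vm Vp =
    ⨅ (p) (_ : p ∈ Gamma V c Vm Vp) (_ : ∀ t, ‖p.1 t‖ ≤ R), lagJ V c p.1 p.2 univ

/-- `ρ₀ := (1/4)·dist(𝒱⁻ ∩ B̄_R(0), 𝒱⁺ ∩ B̄_R(0))`. -/
def rho0 {N : ℕ} (Vm Vp : Set (Euc N)) (R : ℝ) : ℝ :=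
  (1 / 4) * setDist (Vm ∩ closedBall 0 R) (Vp ∩ closedBall 0 R)

/-- membership in `ℳ_c`. -/
def MemM {N : ℕ} (V : Euc N → ℝ) (c : ℝ) (Vm Vp : Set (Euc N)) (R : ℝ)
    (q q' : ℝ → Euc N) : Prop :=
  (q, q') ∈ Gamma V c Vm Vp ∧
  infDist (q 0) {x | V x ≤ c} = rho0 Vm Vp R ∧
  lagJ V c q q' univ = mc V c Vm Vp ∧
  (∀ t, ‖q t‖ ≤ R)

/-- `α_q` (valued in `[-∞,+∞]`, with `−∞` when `q(ℝ) ∩ 𝒱⁻ = ∅`). -/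
def alphaQ {N : ℕ} (Vm : Set (Euc N)) (q : ℝ → Euc N) : EReal :=
  sSup {x : EReal | ∃ t : ℝ, x = (t : EReal) ∧ q t ∈ Vm}

/-- `ω_q` (valued in `[-∞,+∞]`, with `+∞` when there is no `t > α_q` with `q(t) ∈ 𝒱⁺`). -/
def omegaQ {N : ℕ} (Vm Vp : Set (Euc N)) (q : ℝ → Euc N) : EReal :=
  sInf {x : EReal | ∃ t : ℝ, x = (t : EReal) ∧ alphaQ Vm q < (t : EReal) ∧ q t ∈ Vp}

/-- reflection of `q` with respect to `b` (used for `t > b`). -/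
def reflPlus {N : ℕ} (q : ℝ → Euc N) (b : ℝ) : ℝ → Euc N :=
  fun t => if t ≤ b then q t else q (2 * b - t)

/-- reflection of `q` with respect to `a` (used for `t < a`). -/
def reflMinus {N : ℕ} (q : ℝ → Euc N) (a : ℝ) : ℝ → Euc N :=
  fun t => if a ≤ t then q t else q (2 * a - t)

/-- ω-limit set `Ω_q := ⋂_{t > α_q} closure {q(s) : s ≥ t}`. -/
def omegaLimitSet {N : ℕ} (Vm : Set (Euc N)) (q : ℝ → Euc N) : Set (Euc N) :=
  ⋂ (t : ℝ) (_ : alphaQ Vm q < (t : EReal)), closure (q '' Ici t)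

/-- α-limit set `𝒜_q := ⋂_{t < ω_q} closure {q(s) : s ≤ t}`. -/
def alphaLimitSet {N : ℕ} (Vm Vp : Set (Euc N)) (q : ℝ → Euc N) : Set (Euc N) :=
  ⋂ (t : ℝ) (_ : (t : EReal) < omegaQ Vm Vp q), closure (q '' Iic t)

theorem aux_cont {N : ℕ} {q q' : ℝ → Euc N} (h : IsH1loc q q') : Continuous q := by
  have e : q = fun b => q 0 + ∫ t in (0:ℝ)..b, q' t := by
    funext b
    rw [← h.2.2 0 b]; abel
  rw [e]
  exact continuous_const.add (intervalIntegral.continuous_primitive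
    (fun a b => (h.1.integrableOn_isCompact isCompact_uIcc).intervalIntegrable) 0)

theorem aux_sep {N : ℕ} {A B : Set (Euc N)} (hsep : 0 < setDist A B) :
    A.Nonempty ∧ B.Nonempty ∧ ∀ x ∈ A, ∀ y ∈ B, setDist A B ≤ dist x y := by
  have hne : (A ×ˢ B).Nonempty := by
    by_contra h
    rw [Set.not_nonempty_iff_eq_empty] at h
    simp [setDist, h] at hsep
  refine ⟨hne.fst, hne.snd, fun x hx y hy => ?_⟩
  apply csInf_le
  · refine ⟨0, ?_⟩
    rintro _ ⟨p, _, rfl⟩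
    exact dist_nonneg
  · exact ⟨(x, y), ⟨hx, hy⟩, rfl⟩

theorem aux_proj {N : ℕ} {V : Euc N → ℝ} (hV : Continuous V) {c : ℝ} {A B : Set (Euc N)}
    (hsplit : {x | V x ≤ c} = A ∪ B) {δ : ℝ} (hA : A.Nonempty)
    (hd : ∀ x ∈ A, ∀ y ∈ B, δ ≤ dist x y) (z : Euc N) (hz : c ≤ V z)
    (hzA : infDist z A < δ / 2) :
    ∃ x ∈ A, V x = c ∧ ∀ s : ℝ, 0 ≤ s → s ≤ 1 → c ≤ V (x + s • (z - x)) := by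
  have hcl : IsClosed {x | V x ≤ c} := isClosed_le hV continuous_const
  have hne : {x | V x ≤ c}.Nonempty := by
    rw [hsplit]; exact hA.mono subset_union_left
  obtain ⟨x, hx, hxd⟩ := hcl.exists_infDist_eq_dist hne z
  have hxA : x ∈ A := by
    have hx' := hx
    rw [hsplit] at hx'
    rcases hx' with h | h
    · exact h
    · exfalso
      obtain ⟨y, hy, hyd⟩ := (infDist_lt_iff hA).1 hzA
      have h1 : infDist z {x | V x ≤ c} ≤ dist z y := by
        apply infDist_le_dist_of_mem
        rw [hsplit]; exact Or.inl hy
      have h2 := hd y hy x h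
      have h3 := dist_triangle y z x
      rw [dist_comm y z] at h3
      linarith
  have hpos : ∀ s : ℝ, 0 < s → s ≤ 1 → c ≤ V (x + s • (z - x)) := by
    intro s hs hs1
    by_contra! hlt
    have hzx : z ≠ x := by
      rintro rfl
      simp at hlt
      linarith
    have h1 : infDist z {x | V x ≤ c} ≤ dist z (x + s • (z - x)) :=
      infDist_le_dist_of_mem hlt.le
    have h2 : dist z (x + s • (z - x)) = (1 - s) * dist z x := by
      rw [dist_eq_norm, dist_eq_norm]
      have : z - (x + s • (z - x)) = (1 - s) • (z - x) := by
        rw [sub_smul, one_smul]; abel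
      rw [this, norm_smul, Real.norm_of_nonneg (by linarith)]
    have h3 : 0 < dist z x := dist_pos.2 hzx
    rw [h2, hxd] at h1
    nlinarith
  have hx0 : c ≤ V x := by
    have ht : Tendsto (fun s : ℝ => V (x + s • (z - x))) (𝓝[>] 0) (𝓝 (V x)) := by
      have : Continuous (fun s : ℝ => V (x + s • (z - x))) := by fun_prop
      have h := this.tendsto 0
      simp only [zero_smul, add_zero] at h
      exact h.mono_left nhdsWithin_le_nhds
    refine ge_of_tendsto ht ?_
    filter_upwards [Ioc_mem_nhdsGT (zero_lt_one' ℝ)] with s hs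
    exact hpos s hs.1 hs.2
  refine ⟨x, hxA, le_antisymm hx hx0, fun s hs hs1 => ?_⟩
  rcases hs.eq_or_lt with rfl | h
  · simpa using hx0
  · exact hpos s h hs1

theorem aux_glue {N : ℕ} {q q' p p' : ℝ → Euc N} (hq : IsH1loc q q') (hp : IsH1loc p p') (T : ℝ)
    (hT : q T = p T) :
    IsH1loc (fun t => if t ≤ T then q t else p t) (fun t => if t ≤ T then q' t else p' t) := by
  have e : (fun t => if t ≤ T then q' t else p' t) = (Iic T).indicator q' + (Ioi T).indicator p' := by
    funext t
    by_cases h : t ≤ T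
    · simp [h]
    · simp [h, not_le.1 h]
  have e2 : (fun t => ‖if t ≤ T then q' t else p' t‖ ^ 2) =
      (Iic T).indicator (fun t => ‖q' t‖ ^ 2) + (Ioi T).indicator (fun t => ‖p' t‖ ^ 2) := by
    funext t
    by_cases h : t ≤ T
    · simp [h]
    · simp [h, not_le.1 h]
  have hL : LocallyIntegrable (fun t => if t ≤ T then q' t else p' t) volume := by
    rw [e]
    exact (hq.1.indicator measurableSet_Iic).add (hp.1.indicator measurableSet_Ioi)
  refine ⟨hL, ?_, ?_⟩
  · intro a b
    rw [e2]
    exact (IntegrableOn.indicator (hq.2.1 a b) measurableSet_Iic).add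
      (IntegrableOn.indicator (hp.2.1 a b) measurableSet_Ioi)
  · have key : ∀ b, (if b ≤ T then q b else p b) - q T =
        ∫ t in T..b, (if t ≤ T then q' t else p' t) := by
      intro b
      by_cases h : b ≤ T
      · rw [if_pos h, hq.2.2 T b]
        apply intervalIntegral.integral_congr
        intro t ht
        rw [uIcc_of_ge h] at ht
        simp [ht.2]
      · have h' := not_le.1 h
        rw [if_neg h, hT, hp.2.2 T b]
        apply intervalIntegral.integral_congr_ae
        refine Eventually.of_forall fun t ht => ?_
        rw [uIoc_of_le h'.le] at ht
        simp [ht.1]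
    have hI : ∀ a b, IntervalIntegrable (fun t => if t ≤ T then q' t else p' t) volume a b :=
      fun a b => (hL.integrableOn_isCompact isCompact_uIcc).intervalIntegrable
    intro a b
    rw [← intervalIntegral.integral_interval_sub_left (hI T b) (hI T a), ← key, ← key]
    simp

theorem aux_const {N : ℕ} (x : Euc N) : IsH1loc (fun _ => x) (fun _ => 0) :=
  ⟨locallyIntegrable_const 0, fun a b => by simp, fun a b => by simp⟩

theorem aux_lin {N : ℕ} (x v : Euc N) (s : ℝ) :
    IsH1loc (fun t => x + (t - s) • v) (fun _ => v) := by
  refine ⟨locallyIntegrable_const _, fun a b => ?_, fun a b => ?_⟩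
  · exact integrableOn_const (by simp)
  · simp only [intervalIntegral.integral_const, add_sub_add_left_eq_sub, ← sub_smul]
    congr 1; ring

theorem aux_finite {N : ℕ} {V : Euc N → ℝ} (hV : Continuous V) {c : ℝ} {p p' : ℝ → Euc N}
    (hp : IsH1loc p p') (a b : ℝ) (hl : ∀ t ≤ a, V (p t) = c ∧ p' t = 0)
    (hr : ∀ t > b, V (p t) = c ∧ p' t = 0) : lagJ V c p p' univ < ⊤ := by
  have hc := aux_cont hp
  have h1 : IntegrableOn (fun t => 2⁻¹ * ‖p' t‖ ^ 2 + (V (p t) - c)) (Icc a b) volume := by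
    refine ((hp.2.1 a b).const_mul _).add ?_
    exact (Continuous.continuousOn (by fun_prop)).integrableOn_Icc
  have h2 : lagJ V c p p' univ ≤ ∫⁻ t in Icc a b,
      ENNReal.ofReal (2⁻¹ * ‖p' t‖ ^ 2 + (V (p t) - c)) := by
    unfold lagJ
    rw [Measure.restrict_univ, ← lintegral_indicator measurableSet_Icc]
    apply lintegral_mono
    intro t
    by_cases ht : t ∈ Icc a b
    · simp [ht]
    · have : V (p t) = c ∧ p' t = 0 := by
        by_cases hta : t ≤ a
        · exact hl t hta
        · apply hr
          by_contra hh
          exact ht ⟨(not_le.1 hta).le, not_lt.1 hh⟩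
      simp [this.1, this.2]
  exact h2.trans_lt h1.lintegral_lt_top

theorem aux_mc {N : ℕ} {V : Euc N → ℝ} (hV : Continuous V) {c : ℝ} {A B : Set (Euc N)}
    (hsplit : {x | V x ≤ c} = A ∪ B) (hsep : 0 < setDist A B) {q q' : ℝ → Euc N}
    (hq : (q, q') ∈ Gamma V c A B) : mc V c A B < ⊤ := by
  obtain ⟨hA, hB, hd⟩ := aux_sep hsep
  obtain ⟨h1, hc, hm, hpl⟩ := hq
  simp only at h1 hc hm hpl
  obtain ⟨t0, ht0, hz0⟩ := (frequently_atBot.1 (hm (setDist A B / 2) (by linarith))) 0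
  obtain ⟨t1, ht1, hz1⟩ := (frequently_atTop.1 (hpl (setDist A B / 2) (by linarith))) 1
  obtain ⟨x, hxA, hxc, hxs⟩ := aux_proj hV hsplit hA hd (q t0) (hc t0) hz0
  obtain ⟨y, hyB, hyc, hys⟩ := aux_proj hV (hsplit.trans (union_comm _ _)) hB
    (fun y hy x hx => (hd x hx y hy).trans_eq (dist_comm _ _)) (q t1) (hc t1) hz1
  -- glue the pieces
  have g1 := aux_glue (aux_lin y (y - q t1) (t1 + 1)) (aux_const y) (t1 + 1) (by simp)
  have g2 := aux_glue h1 g1 t1 (by simp)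
  have g3 := aux_glue (aux_lin x (q t0 - x) (t0 - 1)) g2 t0 (by
    have : t0 ≤ t1 := by linarith
    simp [this])
  have g4 := aux_glue (aux_const x) g3 (t0 - 1) (by simp)
  have fin : ∀ p p' : ℝ → Euc N, IsH1loc p p' → (∀ t, c ≤ V (p t)) →
      (∀ t ≤ t0 - 1, p t = x ∧ p' t = 0) → (∀ t > t1 + 1, p t = y ∧ p' t = 0) →
      mc V c A B < ⊤ := by
    intro p p' hp hpc hpl hpr
    have hmem : (p, p') ∈ Gamma V c A B := by
      refine ⟨hp, hpc, ?_, ?_⟩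
      · intro ε hε
        apply Eventually.frequently
        filter_upwards [eventually_le_atBot (t0 - 1)] with t ht
        rw [(hpl t ht).1, infDist_zero_of_mem hxA]
        exact hε
      · intro ε hε
        apply Eventually.frequently
        filter_upwards [eventually_gt_atTop (t1 + 1)] with t ht
        rw [(hpr t ht).1, infDist_zero_of_mem hyB]
        exact hε
    have hJ : lagJ V c p p' univ < ⊤ := by
      refine aux_finite hV hp (t0 - 1) (t1 + 1) ?_ ?_
      · intro t ht
        rw [(hpl t ht).1]
        exact ⟨hxc, (hpl t ht).2⟩
      · intro t ht
        rw [(hpr t ht).1]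
        exact ⟨hyc, (hpr t ht).2⟩
    exact lt_of_le_of_lt (iInf₂_le (p, p') hmem) hJ
  refine fin _ _ g4 ?_ ?_ ?_
  · intro t
    split_ifs with i1 i2 i3 i4
    · exact hxc.ge
    · exact hxs _ (by linarith) (by linarith)
    · exact hc t
    · have := hys (t1 + 1 - t) (by linarith) (by linarith)
      have e : y + (t - (t1 + 1)) • (y - q t1) = y + (t1 + 1 - t) • (q t1 - y) := by
        rw [← neg_sub (q t1) y, smul_neg, ← neg_smul]; congr 2; ring
      rwa [e]
    · exact hyc.ge
  · intro t ht
    simp [ht]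
  · intro t ht
    have i1 : ¬ t ≤ t0 - 1 := by linarith
    have i2 : ¬ t ≤ t0 := by linarith
    have i3 : ¬ t ≤ t1 := by linarith
    have i4 : ¬ t ≤ t1 + 1 := by linarith
    simp only [i1, i2, i3, i4, if_false, and_self]

theorem aux_cross {d : ℝ → ℝ} (hd : Continuous d) {a b s t : ℝ} (hab : a < b) (hst : s ≤ t)
    (hs : d s ≤ a) (ht : b ≤ d t) :
    ∃ u v, s ≤ u ∧ u ≤ v ∧ v ≤ t ∧ d u ≤ a ∧ b ≤ d v ∧ ∀ τ ∈ Icc u v, a ≤ d τ ∧ d τ ≤ b := by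
  have hc1 : IsCompact (Icc s t ∩ {τ | b ≤ d τ}) :=
    isCompact_Icc.inter_right (isClosed_le continuous_const hd)
  obtain ⟨v, hv⟩ := hc1.exists_isLeast ⟨t, ⟨hst, le_rfl⟩, ht⟩
  have hc2 : IsCompact (Icc s v ∩ {τ | d τ ≤ a}) :=
    isCompact_Icc.inter_right (isClosed_le hd continuous_const)
  obtain ⟨u, hu⟩ := hc2.exists_isGreatest ⟨s, ⟨le_rfl, hv.1.1.1⟩, hs⟩
  have huv : u < v := by
    rcases hu.1.1.2.eq_or_lt with h | h
    · exfalso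
      have h1 : d u ≤ a := hu.1.2
      have h2 : b ≤ d v := hv.1.2
      rw [h] at h1
      linarith
    · exact h
  have hin : ∀ τ ∈ Ioo u v, a ≤ d τ ∧ d τ ≤ b := by
    intro τ hτ
    constructor
    · by_contra! h
      exact absurd (hu.2 ⟨⟨hu.1.1.1.trans hτ.1.le, hτ.2.le⟩, h.le⟩) (not_le.2 hτ.1)
    · by_contra! h
      exact absurd (hv.2 ⟨⟨hu.1.1.1.trans hτ.1.le, hτ.2.le.trans hv.1.1.2⟩, h.le⟩) (not_le.2 hτ.2)
  refine ⟨u, v, hu.1.1.1, hu.1.1.2, hv.1.1.2, hu.1.2, hv.1.2, ?_⟩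
  have hcl : IsClosed {τ | a ≤ d τ ∧ d τ ≤ b} :=
    (isClosed_le continuous_const hd).inter (isClosed_le hd continuous_const)
  have := hcl.closure_subset_iff.2 (fun τ hτ => hin τ hτ)
  rw [closure_Ioo huv.ne] at this
  exact this

theorem aux_cost {N : ℕ} {V : Euc N → ℝ} {c : ℝ} {q q' : ℝ → Euc N} (hq : IsH1loc q q')
    {k l u v : ℝ} (hk : 0 ≤ k) (huv : u ≤ v) (hl : l ≤ ‖q v - q u‖)
    (hlow : ∀ τ ∈ Icc u v, k ^ 2 / 2 ≤ V (q τ) - c) :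
    ENNReal.ofReal (k * l) ≤ lagJ V c q q' (Icc u v) := by
  calc ENNReal.ofReal (k * l) ≤ ENNReal.ofReal (k * ‖q v - q u‖) :=
        ENNReal.ofReal_le_ofReal (by gcongr)
    _ = ENNReal.ofReal k * ‖q v - q u‖ₑ := by
        rw [ENNReal.ofReal_mul hk, ofReal_norm]
    _ ≤ ENNReal.ofReal k * ∫⁻ t in Icc u v, ‖q' t‖ₑ := by
        gcongr
        rw [hq.2.2 u v, intervalIntegral.integral_of_le huv, ← integral_Icc_eq_integral_Ioc]
        exact enorm_integral_le_lintegral_enorm _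
    _ = ∫⁻ t in Icc u v, ENNReal.ofReal k * ‖q' t‖ₑ := by
        rw [lintegral_const_mul' _ _ ENNReal.ofReal_ne_top]
    _ ≤ _ := by
        apply setLIntegral_mono' measurableSet_Icc
        intro t ht
        rw [← ofReal_norm, ← ENNReal.ofReal_mul hk]
        apply ENNReal.ofReal_le_ofReal
        have := hlow t ht
        nlinarith [sq_nonneg (k - ‖q' t‖)]

theorem aux_eta {N : ℕ} {V : Euc N → ℝ} (hV : Continuous V) {c : ℝ} {A B : Set (Euc N)}
    (hsplit : {x | V x ≤ c} = A ∪ B) (hB : B.Nonempty) {δ : ℝ}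
    (hd : ∀ x ∈ A, ∀ y ∈ B, δ ≤ dist x y) {q q' : ℝ → Euc N} (hq : IsH1loc q q') {R : ℝ}
    (hR : ∀ t, ‖q t‖ ≤ R) {b : ℝ} (hb : 0 < b) (hbδ : b < δ) :
    ∃ η : ℝ≥0∞, 0 < η ∧ ∀ u v, u ≤ v → (∀ τ ∈ Icc u v, b / 2 ≤ infDist (q τ) B ∧ infDist (q τ) B ≤ b) →
      b / 2 ≤ |infDist (q v) B - infDist (q u) B| → η ≤ lagJ V c q q' (Icc u v) := by
  have hK : IsCompact (closedBall (0 : Euc N) R ∩ {x | b / 2 ≤ infDist x B ∧ infDist x B ≤ b}) := by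
    apply (isCompact_closedBall _ _).inter_right
    exact (isClosed_le continuous_const (continuous_infDist_pt B)).inter
      (isClosed_le (continuous_infDist_pt B) continuous_const)
  obtain ⟨m, hm, hm'⟩ := hK.exists_forall_le' (f := fun x => V x) (a := c) hV.continuousOn (by
    rintro x ⟨-, hx1, hx2⟩
    by_contra! h
    have : x ∈ A ∪ B := by rw [← hsplit]; exact h
    rcases this with h | h
    · have : δ ≤ infDist x B := (le_infDist hB).2 fun y hy => hd x h y hy
      linarith
    · rw [infDist_zero_of_mem h] at hx1
      linarith)
  have hk : 0 < Real.sqrt (2 * (m - c)) := Real.sqrt_pos.2 (by linarith)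
  refine ⟨ENNReal.ofReal (Real.sqrt (2 * (m - c)) * (b / 2)), ENNReal.ofReal_pos.2 (by positivity), ?_⟩
  intro u v huv hin hdiff
  refine aux_cost hq hk.le huv ?_ ?_
  · refine hdiff.trans ?_
    have := (lipschitz_infDist_pt B).dist_le_mul (q v) (q u)
    rw [Real.dist_eq, dist_eq_norm] at this
    simpa using this
  · intro τ hτ
    rw [Real.sq_sqrt (by linarith)]
    have := hm' (q τ) ⟨by simpa using hR τ, hin τ hτ⟩
    linarith

theorem aux_tail {N : ℕ} {V : Euc N → ℝ} {c : ℝ} {q q' : ℝ → Euc N}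
    (hJ : lagJ V c q q' univ < ⊤) {η : ℝ≥0∞} (hη : 0 < η) :
    (∃ T, lagJ V c q q' (Ici T) < η) ∧ (∃ T, lagJ V c q q' (Iic T) < η) := by
  set ν := volume.withDensity (fun t => ENNReal.ofReal (2⁻¹ * ‖q' t‖ ^ 2 + (V (q t) - c))) with hν
  have hf : ∀ s, MeasurableSet s → ν s = lagJ V c q q' s := fun s hs => withDensity_apply _ hs
  have hfin : IsFiniteMeasure ν := ⟨by rw [hf _ MeasurableSet.univ]; exact hJ⟩
  constructor
  · have h := tendsto_measure_iInter_atTop (μ := ν) (s := fun n : ℕ => Ici (n : ℝ))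
      (fun n => measurableSet_Ici.nullMeasurableSet)
      (fun m n hmn => Ici_subset_Ici.2 (by exact_mod_cast hmn)) ⟨0, measure_ne_top _ _⟩
    have he : ⋂ n : ℕ, Ici (n : ℝ) = ∅ := by
      ext x
      simp only [mem_iInter, mem_Ici, mem_empty_iff_false, iff_false, not_forall, not_le]
      exact exists_nat_gt x
    rw [he, measure_empty] at h
    obtain ⟨n, hn⟩ := (h.eventually_lt_const hη).exists
    exact ⟨n, by rw [← hf _ measurableSet_Ici]; exact hn⟩
  · have h := tendsto_measure_iInter_atTop (μ := ν) (s := fun n : ℕ => Iic (-(n : ℝ)))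
      (fun n => measurableSet_Iic.nullMeasurableSet)
      (fun m n hmn => Iic_subset_Iic.2 (by simpa using hmn)) ⟨0, measure_ne_top _ _⟩
    have he : ⋂ n : ℕ, Iic (-(n : ℝ)) = ∅ := by
      ext x
      simp only [mem_iInter, mem_Iic, mem_empty_iff_false, iff_false, not_forall, not_le]
      obtain ⟨n, hn⟩ := exists_nat_gt (-x)
      exact ⟨n, by linarith⟩
    rw [he, measure_empty] at h
    obtain ⟨n, hn⟩ := (h.eventually_lt_const hη).exists
    exact ⟨_, by rw [← hf _ measurableSet_Iic]; exact hn⟩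

theorem aux_mono {N : ℕ} {V : Euc N → ℝ} {c : ℝ} {q q' : ℝ → Euc N} {s t : Set ℝ} (h : s ⊆ t) :
    lagJ V c q q' s ≤ lagJ V c q q' t := lintegral_mono_set h

theorem aux_tendsto_of {d : ℝ → ℝ} {l : Filter ℝ} (hd : ∀ t, 0 ≤ d t) {δ : ℝ} (hδ : 0 < δ)
    (h : ∀ b, 0 < b → b < δ → ∀ᶠ t in l, d t < b) : Tendsto d l (𝓝 0) := by
  rw [Metric.tendsto_nhds]
  intro ε hε
  have := h (min ε (δ / 2)) (by positivity) ((min_le_right _ _).trans_lt (by linarith))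
  filter_upwards [this] with t ht
  rw [Real.dist_eq, sub_zero, abs_of_nonneg (hd t)]
  exact ht.trans_le (min_le_left _ _)

theorem aux_top {N : ℕ} {V : Euc N → ℝ} (hV : Continuous V) {c : ℝ} {A B : Set (Euc N)}
    (hsplit : {x | V x ≤ c} = A ∪ B) (hB : B.Nonempty) {δ : ℝ} (hδ : 0 < δ)
    (hd : ∀ x ∈ A, ∀ y ∈ B, δ ≤ dist x y) {q q' : ℝ → Euc N} (hq : IsH1loc q q') {R : ℝ}
    (hR : ∀ t, ‖q t‖ ≤ R) (hJ : lagJ V c q q' univ < ⊤)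
    (hfr : ∀ ε > 0, ∃ᶠ t in atTop, infDist (q t) B < ε) :
    Tendsto (fun t => infDist (q t) B) atTop (𝓝 0) := by
  refine aux_tendsto_of (fun t => infDist_nonneg) hδ fun b hb hbδ => ?_
  obtain ⟨η, hη, H⟩ := aux_eta hV hsplit hB hd hq hR hb hbδ
  obtain ⟨T, hT⟩ := (aux_tail hJ hη).1
  obtain ⟨s, hs, hsd⟩ := frequently_atTop.1 (hfr (b / 2) (by linarith)) T
  filter_upwards [eventually_ge_atTop s] with t ht
  by_contra! hcon
  have hcont : Continuous (fun t => infDist (q t) B) :=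
    (continuous_infDist_pt B).comp (aux_cont hq)
  obtain ⟨u, v, h1, h2, h3, h4, h5, h6⟩ :=
    aux_cross hcont (a := b / 2) (b := b) (by linarith) ht hsd.le hcon
  have := H u v h2 h6 (le_trans (by linarith) (le_abs_self _))
  exact absurd (this.trans (aux_mono (t := Ici T) fun x hx => hs.trans (h1.trans hx.1)))
    (not_le.2 hT)

theorem aux_bot {N : ℕ} {V : Euc N → ℝ} (hV : Continuous V) {c : ℝ} {A B : Set (Euc N)}
    (hsplit : {x | V x ≤ c} = A ∪ B) (hB : B.Nonempty) {δ : ℝ} (hδ : 0 < δ)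
    (hd : ∀ x ∈ A, ∀ y ∈ B, δ ≤ dist x y) {q q' : ℝ → Euc N} (hq : IsH1loc q q') {R : ℝ}
    (hR : ∀ t, ‖q t‖ ≤ R) (hJ : lagJ V c q q' univ < ⊤)
    (hfr : ∀ ε > 0, ∃ᶠ t in atBot, infDist (q t) B < ε) :
    Tendsto (fun t => infDist (q t) B) atBot (𝓝 0) := by
  refine aux_tendsto_of (fun t => infDist_nonneg) hδ fun b hb hbδ => ?_
  obtain ⟨η, hη, H⟩ := aux_eta hV hsplit hB hd hq hR hb hbδ
  obtain ⟨T, hT⟩ := (aux_tail hJ hη).2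
  obtain ⟨s, hs, hsd⟩ := frequently_atBot.1 (hfr (b / 2) (by linarith)) T
  filter_upwards [eventually_le_atBot s] with t ht
  by_contra! hcon
  have hcont : Continuous (fun t => infDist (q (-t)) B) :=
    (continuous_infDist_pt B).comp ((aux_cont hq).comp continuous_neg)
  obtain ⟨u, v, h1, h2, h3, h4, h5, h6⟩ :=
    aux_cross hcont (a := b / 2) (b := b) (s := -s) (t := -t) (by linarith) (by linarith)
      (by simpa using hsd.le) (by simpa using hcon)
  have := H (-v) (-u) (by linarith)
    (fun τ hτ => by simpa using h6 (-τ) ⟨by linarith [hτ.2], by linarith [hτ.1]⟩)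
    (le_trans (by linarith) (neg_le_abs _))
  refine absurd (this.trans (aux_mono (t := Iic T) fun x hx => ?_)) (not_le.2 hT)
  have := hx.2
  simp only [mem_Iic]
  linarith

/-- Lemma 2.6: behaviour of a minimizer at the endpoints of its connecting time interval. -/
theorem minimizer_boundary_behaviour {N : ℕ} (hN : 0 < N) (V : Euc N → ℝ) (hV : ContDiff ℝ 1 V)
    (c : ℝ) (Vm Vp : Set (Euc N)) (hVm : IsClosed Vm) (hVp : IsClosed Vp)
    (hsplit : {x | V x ≤ c} = Vm ∪ Vp) (hsep : 0 < setDist Vm Vp)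
    (R : ℝ) (hR : 0 < R) (hcoer : Coercive V c Vm Vp R)
    (q q' : ℝ → Euc N) (hq : MemM V c Vm Vp R q q') :
    ((alphaQ Vm q = ⊥ → Tendsto (fun t => infDist (q t) Vm) atBot (𝓝 0)) ∧
     (∀ a : ℝ, alphaQ Vm q = (a : EReal) →
        Tendsto (fun t => infDist (q t) Vm) (𝓝[>] a) (𝓝 0) ∧ V (q a) = c ∧ q a ∈ Vm)) ∧
    ((omegaQ Vm Vp q = ⊤ → Tendsto (fun t => infDist (q t) Vp) atTop (𝓝 0)) ∧
     (∀ b : ℝ, omegaQ Vm Vp q = (b : EReal) →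
        Tendsto (fun t => infDist (q t) Vp) (𝓝[<] b) (𝓝 0) ∧ V (q b) = c ∧ q b ∈ Vp)) := by
  have hVc := hV.continuous
  obtain ⟨hG, -, hmin, hbd⟩ := hq
  have hJ : lagJ V c q q' univ < ⊤ := by
    rw [hmin]; exact aux_mc hVc hsplit hsep hG
  obtain ⟨hA, hB, hd⟩ := aux_sep hsep
  obtain ⟨h1, hc, hfm, hfp⟩ := hG
  simp only at h1 hc hfm hfp
  have hqc := aux_cont h1
  have hle : ∀ x ∈ Vm ∪ Vp, V x ≤ c := fun x hx => by rw [← hsplit] at hx; exact hx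
  have hcm : Continuous (fun t => infDist (q t) Vm) := (continuous_infDist_pt Vm).comp hqc
  have hcp : Continuous (fun t => infDist (q t) Vp) := (continuous_infDist_pt Vp).comp hqc
  refine ⟨⟨fun _ => ?_, fun a ha => ?_⟩, ⟨fun _ => ?_, fun b hb => ?_⟩⟩
  · exact aux_bot hVc (hsplit.trans (union_comm _ _)) hA hsep
      (fun y hy x hx => (hd x hx y hy).trans_eq (dist_comm _ _)) h1 hbd hJ hfm
  · have hmem : q a ∈ Vm := by
      have : a ∈ closure (q ⁻¹' Vm) := by
        rw [Metric.mem_closure_iff]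
        intro ε hε
        have hlt : ((a - ε : ℝ) : EReal) < alphaQ Vm q := by
          rw [ha]; exact_mod_cast sub_lt_self a hε
        obtain ⟨_, ⟨t, rfl, ht⟩, hlt'⟩ := lt_sSup_iff.1 hlt
        have hta : (t : EReal) ≤ a := by rw [← ha]; exact le_sSup ⟨t, rfl, ht⟩
        have h1 : a - ε < t := by exact_mod_cast hlt'
        have h2 : t ≤ a := by exact_mod_cast hta
        refine ⟨t, ht, ?_⟩
        rw [Real.dist_eq, abs_of_nonneg (by linarith)]
        linarith
      rwa [(hVm.preimage hqc).closure_eq] at this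
    refine ⟨?_, le_antisymm (hle _ (Or.inl hmem)) (hc a), hmem⟩
    have := hcm.tendsto a
    rw [infDist_zero_of_mem hmem] at this
    exact this.mono_left nhdsWithin_le_nhds
  · exact aux_top hVc hsplit hB hsep hd h1 hbd hJ hfp
  · have hmem : q b ∈ Vp := by
      have : b ∈ closure (q ⁻¹' Vp) := by
        rw [Metric.mem_closure_iff]
        intro ε hε
        have hlt : omegaQ Vm Vp q < ((b + ε : ℝ) : EReal) := by
          rw [hb]; exact_mod_cast lt_add_of_pos_right b hε
        obtain ⟨_, ⟨t, rfl, ht0, ht⟩, hlt'⟩ := sInf_lt_iff.1 hlt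
        have hta : (b : EReal) ≤ t := by rw [← hb]; exact sInf_le ⟨t, rfl, ht0, ht⟩
        have h1 : t < b + ε := by exact_mod_cast hlt'
        have h2 : b ≤ t := by exact_mod_cast hta
        refine ⟨t, ht, ?_⟩
        rw [dist_comm, Real.dist_eq, abs_of_nonneg (by linarith)]
        linarith
      rwa [(hVp.preimage hqc).closure_eq] at this
    refine ⟨?_, le_antisymm (hle _ (Or.inr hmem)) (hc b), hmem⟩
    have := hcp.tendsto b
    rw [infDist_zero_of_mem hmem] at this
    exact this.mono_left nhdsWithin_le_nhds
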